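/- Suppose P(x,y) = A·x(x−1)/2 + B·xy + C·y(y−1)/2 + D·x + E·y + F with A,B,C,D,E,F ∈ ℤ is a quadratic packing polynomial on the sector S(α) for some α > 0. Then the limit lim_{n→∞} (1/n)·#(R_n ∩ ℤ²) exists and equals ∫₀^{α} dt / (A + 2B·t + C·t²), where R_n = {(x,y) ∈ S(α) : 0 ≤ P(x,y) ≤ n}; in particular this integral equals 1. -/

import Mathlib

/-!
Write `q t = A + 2Bt + Ct²`, so that the quadratic part of `P` at `(x, y)` is `x² q(y/x) / 2`.
Since `P` is a bijection from the lattice points of the sector onto `ℕ`, exactly `n + 1` of them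
satisfy `P ≤ n`; the limit is therefore `1`, and everything lies in showing `∫₀^α 1/q = 1`.

For `[a, b] ⊆ [0, α]` on which `q > 0`, the region `{a x ≤ y ≤ b x, x² q(y/x) ≤ 2}` is bounded and
has area `∫ₐᵇ 1/q`: in the coordinates `(r, t) ↦ (r, r t)`, of Jacobian `r`, the variable `r` runs
over `(0, √(2/q t)]`. So its dilate by `m` has `m² ∫ₐᵇ 1/q + o(m²)` lattice points
(`tendsto_ncard_latticeRegion`). On such a cone the quadratic part dominates `x²`, hence `P` differs
from it by at most `ε` times itself plus a constant (`abs_quadPoly_sub_form_le`), and comparing with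
the count `n + 1` gives `∫ₐᵇ 1/q ≤ 1` (`integral_le_one`), and `∫₀^α 1/q ≥ 1` if `q > 0` on all of
`[0, α]` (`one_le_integral`).

Positivity of `q` on `[0, α]` (`form_pos`) is forced. At a rational slope with `q < 0`, `P` would be
negative far out along the ray, so `q ≥ 0` by density. If `q` vanished at some `t₀`, then `1/q`
would grow at least like `1/|t - t₀|` and so would not be integrable near `t₀`, contradicting the
uniform bound `∫ₐᵇ 1/q ≤ 1` over intervals `[a, b]` that approach `t₀`.
-/

open Filter
open MeasureTheory Set Topology Asymptotics
open scoped Pointwise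

/-! ### Area in the coordinates `(x, y/x)` -/

/-- The map `(r, t) ↦ (r, r t)`: the point with first coordinate `r` on the line of slope `t`. -/
def slopeMap (p : ℝ × ℝ) : ℝ × ℝ := (p.1, p.1 * p.2)

/-- The Fréchet derivative of `slopeMap`. -/
noncomputable def slopeMapDeriv (p : ℝ × ℝ) : ℝ × ℝ →L[ℝ] ℝ × ℝ :=
  (Matrix.toLin (.finTwoProd ℝ) (.finTwoProd ℝ) !![1, 0; p.2, p.1]).toContinuousLinearMap

lemma hasFDerivAt_slopeMap (p : ℝ × ℝ) : HasFDerivAt slopeMap (slopeMapDeriv p) p := by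
  unfold slopeMapDeriv
  rw [Matrix.toLin_finTwoProd_toContinuousLinearMap]
  convert! HasFDerivAt.prodMk (𝕜 := ℝ) (hasFDerivAt_fst (p := p))
    ((hasFDerivAt_fst (𝕜 := ℝ) (p := p)).mul (hasFDerivAt_snd (p := p))) using 2 <;>
  simp [add_comm]

lemma det_slopeMapDeriv (p : ℝ × ℝ) : (slopeMapDeriv p).det = p.1 := by
  unfold slopeMapDeriv
  simp only [LinearMap.det_toContinuousLinearMap, LinearMap.det_toLin, Matrix.det_fin_two_of]
  ring

lemma slopeMap_injOn : InjOn slopeMap {p | 0 < p.1} := by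
  rintro ⟨r, t⟩ hr ⟨r', t'⟩ _ h
  simp only [slopeMap, Prod.mk.injEq] at h
  obtain ⟨rfl, h⟩ := h
  simp only [mem_ofPred_eq] at hr
  rw [mul_right_inj' hr.ne'] at h
  rw [h]

lemma volume_slopeMap_image {T : Set (ℝ × ℝ)} (hT : MeasurableSet T) (hpos : ∀ p ∈ T, 0 < p.1) :
    volume (slopeMap '' T) = ∫⁻ p in T, ENNReal.ofReal p.1 := by
  have h := lintegral_image_eq_lintegral_abs_det_fderiv_mul volume hT
    (fun p _ => (hasFDerivAt_slopeMap p).hasFDerivWithinAt)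
    (slopeMap_injOn.mono hpos) (fun _ => 1)
  simp only [lintegral_one, Measure.restrict_apply_univ, mul_one, det_slopeMapDeriv] at h
  rw [h]
  exact setLIntegral_congr_fun hT fun p hp => by rw [abs_of_pos (hpos p hp)]

lemma lintegral_Ioc_id {R : ℝ} (hR : 0 ≤ R) :
    ∫⁻ r in Ioc 0 R, ENNReal.ofReal r = ENNReal.ofReal (R ^ 2 / 2) := by
  rw [← ofReal_integral_eq_lintegral_ofReal]
  · rw [← intervalIntegral.integral_of_le hR, integral_id]; simp
  · exact (continuous_id.integrableOn_Icc).mono_set Ioc_subset_Icc_self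
  · exact (ae_restrict_iff' measurableSet_Ioc).2 (ae_of_all _ fun r hr => hr.1.le)

/-! ### The cone between two slopes, cut off by the quadratic form -/

section region
variable (A B C a b : ℝ)

/-- The points of the cone between the lines of slopes `a` and `b` at which the form
`(A x² + 2B x y + C y²) / 2` is at most `1`. The apex is left out, so that `slopeMap` is injective
over the region. -/
def formRegion : Set (ℝ × ℝ) :=
  {z | 0 < z.1 ∧ a * z.1 ≤ z.2 ∧ z.2 ≤ b * z.1 ∧
    A * z.1 ^ 2 + 2 * B * z.1 * z.2 + C * z.2 ^ 2 ≤ 2}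

/-- `formRegion` in the coordinates `(x, y/x)`. -/
def slopeRegion : Set (ℝ × ℝ) :=
  {p | 0 < p.1 ∧ p.2 ∈ Icc a b ∧ p.1 ^ 2 * (A + 2 * B * p.2 + C * p.2 ^ 2) ≤ 2}

lemma slopeMap_image_slopeRegion :
    slopeMap '' slopeRegion A B C a b = formRegion A B C a b := by
  ext ⟨x, y⟩
  constructor
  · rintro ⟨⟨r, t⟩, ⟨h1, ⟨h2, h3⟩, h4⟩, h⟩
    simp only [slopeMap, Prod.mk.injEq] at h h1 h2 h3 h4
    obtain ⟨rfl, rfl⟩ := h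
    refine ⟨h1, ?_, ?_, ?_⟩
    · simp only; nlinarith
    · simp only; nlinarith
    · simp only; nlinarith
  · rintro ⟨h1, h2, h3, h4⟩
    simp only at h1 h2 h3 h4
    refine ⟨(x, y / x), ⟨h1, ⟨?_, ?_⟩, ?_⟩, ?_⟩
    · simpa [le_div_iff₀ h1] using h2
    · simpa [div_le_iff₀ h1] using h3
    · simp only
      field_simp
      linarith
    · simp only [slopeMap]
      congr 1
      field_simp

lemma measurableSet_slopeRegion : MeasurableSet (slopeRegion A B C a b) := by
  unfold slopeRegion
  simp only [ofPred_and]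
  refine MeasurableSet.inter (measurableSet_lt measurable_const measurable_fst)
    (MeasurableSet.inter (measurable_snd measurableSet_Icc) (measurableSet_le ?_ measurable_const))
  fun_prop

lemma measurableSet_formRegion : MeasurableSet (formRegion A B C a b) := by
  unfold formRegion
  simp only [ofPred_and]
  refine MeasurableSet.inter (measurableSet_lt measurable_const measurable_fst)
    (MeasurableSet.inter (measurableSet_le ?_ measurable_snd)
    (MeasurableSet.inter (measurableSet_le measurable_snd ?_)
      (measurableSet_le ?_ measurable_const)))
  all_goals fun_prop

variable {A B C a b}

lemma intervalIntegrable_inv_form (hab : a ≤ b)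
    (hq : ∀ t ∈ Icc a b, 0 < A + 2 * B * t + C * t ^ 2) :
    IntervalIntegrable (fun t => 1 / (A + 2 * B * t + C * t ^ 2)) volume a b := by
  apply ContinuousOn.intervalIntegrable
  rw [uIcc_of_le hab]
  exact continuousOn_const.div (by fun_prop) fun t ht => (hq t ht).ne'

lemma volume_formRegion (hab : a ≤ b) (hq : ∀ t ∈ Icc a b, 0 < A + 2 * B * t + C * t ^ 2) :
    volume.real (formRegion A B C a b) = ∫ t in a..b, 1 / (A + 2 * B * t + C * t ^ 2) := by
  have hint : IntegrableOn (fun t => 1 / (A + 2 * B * t + C * t ^ 2)) (Icc a b) := by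
    rw [integrableOn_Icc_iff_integrableOn_Ioc]
    exact (intervalIntegrable_iff_integrableOn_Ioc_of_le hab).1 (intervalIntegrable_inv_form hab hq)
  have hnn : 0 ≤ᵐ[volume.restrict (Icc a b)] fun t => 1 / (A + 2 * B * t + C * t ^ 2) :=
    (ae_restrict_iff' measurableSet_Icc).2 (ae_of_all _ fun t ht => by
      have := hq t ht; positivity)
  have key : volume (formRegion A B C a b) =
      ∫⁻ t in Icc a b, ENNReal.ofReal (1 / (A + 2 * B * t + C * t ^ 2)) := by
    rw [← slopeMap_image_slopeRegion, volume_slopeMap_image (measurableSet_slopeRegion ..)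
      (fun p hp => hp.1), ← lintegral_indicator (measurableSet_slopeRegion ..),
      Measure.volume_eq_prod, lintegral_prod_symm, ← lintegral_indicator measurableSet_Icc]
    · refine lintegral_congr fun t => ?_
      by_cases ht : t ∈ Icc a b
      · have hqt := hq t ht
        rw [indicator_of_mem ht]
        have hs : ∀ r : ℝ, (slopeRegion A B C a b).indicator (fun p => ENNReal.ofReal p.1) (r, t) =
            (Ioc 0 √(2 / (A + 2 * B * t + C * t ^ 2))).indicator (fun r => ENNReal.ofReal r) r := by
          intro r
          have : (r, t) ∈ slopeRegion A B C a b ↔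
              r ∈ Ioc 0 √(2 / (A + 2 * B * t + C * t ^ 2)) := by
            simp only [slopeRegion, mem_ofPred_eq, ht, true_and, mem_Ioc]
            refine and_congr_right fun hr => ?_
            rw [Real.le_sqrt' hr, le_div_iff₀ hqt]
          by_cases hr : r ∈ Ioc 0 √(2 / (A + 2 * B * t + C * t ^ 2))
          · rw [indicator_of_mem hr, indicator_of_mem (this.2 hr)]
          · rw [indicator_of_notMem hr, indicator_of_notMem (fun h => hr (this.1 h))]
        simp_rw [hs]
        rw [lintegral_indicator measurableSet_Ioc, lintegral_Ioc_id (Real.sqrt_nonneg _),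
          Real.sq_sqrt (by positivity)]
        congr 1
        ring
      · rw [indicator_of_notMem ht]
        have hs : ∀ r : ℝ, (slopeRegion A B C a b).indicator (fun p => ENNReal.ofReal p.1) (r, t) =
            0 := fun r => indicator_of_notMem (fun h => ht h.2.1) _
        simp_rw [hs, lintegral_zero]
    · exact (Measurable.indicator (by fun_prop) (measurableSet_slopeRegion ..)).aemeasurable
  rw [measureReal_def, key, intervalIntegral.integral_of_le hab, ← integral_Icc_eq_integral_Ioc,
    integral_eq_lintegral_of_nonneg_ae hnn hint.aestronglyMeasurable]

/-- On a cone where the form is positive, it dominates `x²`, by compactness of the set of slopes. -/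
lemma exists_form_lower (hab : a ≤ b) (hq : ∀ t ∈ Icc a b, 0 < A + 2 * B * t + C * t ^ 2) :
    ∃ c > 0, ∀ x y : ℝ, 0 < x → a * x ≤ y → y ≤ b * x →
      c * x ^ 2 ≤ A * x ^ 2 + 2 * B * x * y + C * y ^ 2 := by
  obtain ⟨t₀, ht₀, hmin⟩ := isCompact_Icc.exists_isMinOn (nonempty_Icc.2 hab)
    (f := fun t => A + 2 * B * t + C * t ^ 2) (by fun_prop)
  refine ⟨_, hq t₀ ht₀, fun x y hx h1 h2 => ?_⟩
  have h : y / x ∈ Icc a b := ⟨by rwa [le_div_iff₀ hx], by rwa [div_le_iff₀ hx]⟩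
  have h3 := hmin h
  simp only [mem_ofPred_eq] at h3
  calc _ ≤ (A + 2 * B * (y / x) + C * (y / x) ^ 2) * x ^ 2 := by gcongr
    _ = _ := by field_simp

lemma isBounded_formRegion (hab : a ≤ b)
    (hq : ∀ t ∈ Icc a b, 0 < A + 2 * B * t + C * t ^ 2) :
    Bornology.IsBounded (formRegion A B C a b) := by
  obtain ⟨c, hc, h⟩ := exists_form_lower hab hq
  have hsub : formRegion A B C a b ⊆ (fun p : ℝ × ℝ => (p.1, p.2 * p.1)) ''
      (Icc 0 (√(2 / c)) ×ˢ Icc a b) := by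
    rintro ⟨x, y⟩ ⟨h1, h2, h3, h4⟩
    simp only at h1 h2 h3 h4
    refine ⟨(x, y / x), ⟨⟨h1.le, ?_⟩, ⟨by rwa [le_div_iff₀ h1], by rwa [div_le_iff₀ h1]⟩⟩, ?_⟩
    · rw [Real.le_sqrt' h1, le_div_iff₀ hc]
      linarith [h x y h1 h2 h3]
    · simp only; congr 1; field_simp
  exact (((isCompact_Icc.prod isCompact_Icc).image (by fun_prop)).isBounded).subset hsub

/-- Away from the apex, a frontier point has slope `a` or `b` or lies on the level curve of the form,
which meets each ray once; so the frontier is, up to the apex, the `slopeMap` image of a null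
set. -/
lemma volume_frontier_formRegion
    (hq : ∀ t ∈ Icc a b, 0 < A + 2 * B * t + C * t ^ 2) :
    volume (frontier (formRegion A B C a b)) = 0 := by
  set T₀ : Set (ℝ × ℝ) := {p | p.2 = a ∨ p.2 = b ∨
    (0 < p.1 ∧ p.2 ∈ Icc a b ∧ p.1 ^ 2 * (A + 2 * B * p.2 + C * p.2 ^ 2) = 2)} with hT₀
  have hmeas : MeasurableSet T₀ := by
    refine (measurable_snd (measurableSet_singleton a)).union
      ((measurable_snd (measurableSet_singleton b)).union
      (MeasurableSet.inter (measurableSet_lt measurable_const measurable_fst)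
      (MeasurableSet.inter (measurable_snd measurableSet_Icc)
        (measurableSet_eq_fun ?_ measurable_const))))
    fun_prop
  have hnull : volume T₀ = 0 := by
    rw [Measure.volume_eq_prod, Measure.prod_apply_symm hmeas]
    rw [lintegral_eq_zero_iff (measurable_measure_prodMk_right hmeas)]
    have : ∀ᵐ t : ℝ, t ≠ a ∧ t ≠ b :=
      (Measure.ae_ne volume a).and (Measure.ae_ne volume b)
    filter_upwards [this] with t ht
    refine Set.Subsingleton.measure_zero ?_ volume
    rintro r hr r' hr'
    simp only [hT₀, mem_preimage, mem_ofPred_eq, ht.1, ht.2, false_or] at hr hr'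
    have h1 : r ^ 2 = r' ^ 2 := mul_right_cancel₀ (hq t hr.2.1).ne' (hr.2.2.trans hr'.2.2.symm)
    exact (pow_left_inj₀ hr.1.le hr'.1.le two_ne_zero).1 h1
  have himg : volume (slopeMap '' T₀) = 0 :=
    addHaar_image_eq_zero_of_differentiableOn_of_addHaar_eq_zero volume
      (fun p _ => (hasFDerivAt_slopeMap p).differentiableAt.differentiableWithinAt) hnull
  refine measure_mono_null (t := {(0, 0)} ∪ slopeMap '' T₀) ?_
    (measure_union_null (measure_singleton _) himg)
  rintro ⟨x, y⟩ ⟨hcl, hint⟩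
  have hcl' : (x, y) ∈ {z : ℝ × ℝ | 0 ≤ z.1 ∧ a * z.1 ≤ z.2 ∧ z.2 ≤ b * z.1 ∧
      A * z.1 ^ 2 + 2 * B * z.1 * z.2 + C * z.2 ^ 2 ≤ 2} := by
    refine closure_minimal (t := {z : ℝ × ℝ | 0 ≤ z.1 ∧ a * z.1 ≤ z.2 ∧ z.2 ≤ b * z.1 ∧
      A * z.1 ^ 2 + 2 * B * z.1 * z.2 + C * z.2 ^ 2 ≤ 2}) ?_ ?_ hcl
    · rintro z ⟨h1, h2⟩
      exact ⟨h1.le, h2⟩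
    · simp only [ofPred_and]
      refine IsClosed.inter (isClosed_le (by fun_prop) (by fun_prop))
        (IsClosed.inter (isClosed_le (by fun_prop) (by fun_prop))
        (IsClosed.inter (isClosed_le (by fun_prop) (by fun_prop))
        (isClosed_le (by fun_prop) (by fun_prop))))
  obtain ⟨h1, h2, h3, h4⟩ := hcl'
  simp only at h1 h2 h3 h4
  rcases h1.eq_or_lt with rfl | h1
  · left
    simp only [mul_zero] at h2 h3
    simp [le_antisymm h3 h2]
  right
  refine ⟨(x, y / x), ?_, by simp only [slopeMap]; congr 1; field_simp⟩
  by_contra hcon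
  simp only [hT₀, mem_ofPred_eq, not_or, not_and] at hcon
  obtain ⟨h5, h6, h7⟩ := hcon
  have h7 := h7 h1 ⟨by rwa [le_div_iff₀ h1], by rwa [div_le_iff₀ h1]⟩
  apply hint
  refine mem_interior.2 ⟨{z : ℝ × ℝ | 0 < z.1 ∧ a * z.1 < z.2 ∧ z.2 < b * z.1 ∧
      A * z.1 ^ 2 + 2 * B * z.1 * z.2 + C * z.2 ^ 2 < 2}, ?_, ?_, ?_⟩
  · rintro z ⟨g1, g2, g3, g4⟩
    exact ⟨g1, g2.le, g3.le, g4.le⟩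
  · simp only [ofPred_and]
    refine IsOpen.inter (isOpen_lt (by fun_prop) (by fun_prop))
        (IsOpen.inter (isOpen_lt (by fun_prop) (by fun_prop))
        (IsOpen.inter (isOpen_lt (by fun_prop) (by fun_prop))
        (isOpen_lt (by fun_prop) (by fun_prop))))
  · refine ⟨h1, lt_of_le_of_ne h2 ?_, lt_of_le_of_ne h3 ?_, lt_of_le_of_ne h4 ?_⟩
    · rintro h; apply h5; simp only at h; rw [← h]; field_simp
    · rintro h; apply h6; simp only at h; rw [h]; field_simp
    · rintro h; apply h7; refine Eq.trans ?_ h; simp only; field_simp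

/-! ### Counting lattice points -/

/-- The lattice points of the dilate by `m` of `formRegion A B C a b`. -/
def latticeRegion (A B C a b : ℝ) (m : ℕ) : Set (ℤ × ℤ) :=
  {z | 0 < z.1 ∧ a * z.1 ≤ z.2 ∧ z.2 ≤ b * z.1 ∧
    A * z.1 ^ 2 + 2 * B * z.1 * z.2 + C * z.2 ^ 2 ≤ 2 * (m : ℝ) ^ 2}

lemma scale_inter_lattice {m : ℕ} (hm : 0 < m) :
    ((Homeomorph.finTwoArrow ⁻¹' formRegion A B C a b) ∩
      (m : ℝ)⁻¹ • (Submodule.span ℤ (range (Pi.basisFun ℝ (Fin 2))) : Set (Fin 2 → ℝ))) =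
    (fun z : ℤ × ℤ => ![(m : ℝ)⁻¹ * z.1, (m : ℝ)⁻¹ * z.2]) '' latticeRegion A B C a b m := by
  have hm' : (0 : ℝ) < m := by exact_mod_cast hm
  have hiff : ∀ x y : ℤ, (((m : ℝ)⁻¹ * x, (m : ℝ)⁻¹ * y) : ℝ × ℝ) ∈ formRegion A B C a b ↔
      (x, y) ∈ latticeRegion A B C a b m := by
    intro x y
    simp only [formRegion, latticeRegion, mem_ofPred_eq]
    refine and_congr ?_ (and_congr ?_ (and_congr ?_ ?_))
    · rw [mul_pos_iff_of_pos_left (by positivity)]; exact_mod_cast Iff.rfl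
    · rw [mul_left_comm, mul_le_mul_iff_right₀ (by positivity)]
    · rw [mul_left_comm, mul_le_mul_iff_right₀ (by positivity)]
    · have : A * ((m : ℝ)⁻¹ * x) ^ 2 + 2 * B * ((m : ℝ)⁻¹ * x) * ((m : ℝ)⁻¹ * y) +
          C * ((m : ℝ)⁻¹ * y) ^ 2 = (A * x ^ 2 + 2 * B * x * y + C * y ^ 2) / (m : ℝ) ^ 2 := by
        field_simp
      rw [this, div_le_iff₀ (by positivity)]
  ext v
  constructor
  · rintro ⟨hv, w, hw, rfl⟩
    rw [SetLike.mem_coe, Module.Basis.mem_span_iff_repr_mem] at hw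
    simp only [Pi.basisFun_repr] at hw
    obtain ⟨x, hx⟩ := hw 0
    obtain ⟨y, hy⟩ := hw 1
    simp only [algebraMap_int_eq, Int.coe_castRingHom] at hx hy
    refine ⟨(x, y), (hiff x y).1 ?_, ?_⟩
    · rw [hx, hy]
      exact hv
    · ext i; fin_cases i <;> simp [hx, hy]
  · rintro ⟨⟨x, y⟩, hz, rfl⟩
    refine ⟨(hiff x y).2 hz, ![(x : ℝ), (y : ℝ)], ?_, ?_⟩
    · rw [SetLike.mem_coe, Module.Basis.mem_span_iff_repr_mem]
      intro i
      fin_cases i <;> simp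
    · ext i; fin_cases i <;> simp

lemma tendsto_ncard_latticeRegion (hab : a ≤ b)
    (hq : ∀ t ∈ Icc a b, 0 < A + 2 * B * t + C * t ^ 2) :
    Tendsto (fun m : ℕ => ((latticeRegion A B C a b m).ncard : ℝ) / (m : ℝ) ^ 2) atTop
      (𝓝 (∫ t in a..b, 1 / (A + 2 * B * t + C * t ^ 2))) := by
  have hvol : volume.real (Homeomorph.finTwoArrow ⁻¹' formRegion A B C a b : Set (Fin 2 → ℝ)) =
      ∫ t in a..b, 1 / (A + 2 * B * t + C * t ^ 2) := by
    rw [← volume_formRegion hab hq, measureReal_def, measureReal_def]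
    congr 1
    exact (volume_preserving_finTwoArrow ℝ).measure_preimage
      (measurableSet_formRegion ..).nullMeasurableSet
  have h := tendsto_card_div_pow_atTop_volume
    (Homeomorph.finTwoArrow ⁻¹' formRegion A B C a b : Set (Fin 2 → ℝ)) ?_ ?_ ?_
  · rw [hvol] at h
    refine h.congr' ?_
    filter_upwards [eventually_gt_atTop 0] with m hm
    rw [scale_inter_lattice hm, Nat.card_coe_set_eq, ncard_image_of_injective, Fintype.card_fin]
    have hm' : (m : ℝ) ≠ 0 := by exact_mod_cast hm.ne'
    rintro ⟨x, y⟩ ⟨x', y'⟩ h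
    have h0 := congrFun h 0
    have h1 := congrFun h 1
    simp [hm'] at h0 h1
    rw [h0, h1]
  · obtain ⟨R, hR⟩ := (isBounded_formRegion hab hq).subset_closedBall 0
    refine (Metric.isBounded_closedBall (x := (0 : Fin 2 → ℝ)) (r := max R 0)).subset fun v hv => ?_
    have := hR hv
    simp only [Homeomorph.finTwoArrow, mem_closedBall_zero_iff, Prod.norm_def] at this ⊢
    rw [pi_norm_le_iff_of_nonneg (le_max_right _ _)]
    intro i
    refine le_max_of_le_left (le_trans ?_ this)
    fin_cases i
    · exact le_max_left _ _
    · exact le_max_right _ _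
  · exact Homeomorph.finTwoArrow.continuous.measurable (measurableSet_formRegion ..)
  · rw [← Homeomorph.preimage_frontier]
    have := (volume_preserving_finTwoArrow ℝ).measure_preimage
      (s := frontier (formRegion A B C a b)) isClosed_frontier.measurableSet.nullMeasurableSet
    rw [volume_frontier_formRegion hq] at this
    exact this

lemma finite_latticeRegion (hab : a ≤ b)
    (hq : ∀ t ∈ Icc a b, 0 < A + 2 * B * t + C * t ^ 2) (m : ℕ) :
    (latticeRegion A B C a b m).Finite := by
  obtain ⟨c, hc, h⟩ := exists_form_lower hab hq
  obtain ⟨N, hN⟩ := exists_nat_gt (√(2 * (m : ℝ) ^ 2 / c))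
  obtain ⟨L, hL⟩ := exists_nat_gt (max |a| |b| * N)
  refine ((finite_Icc (0 : ℤ) N).prod (finite_Icc (-L : ℤ) L)).subset ?_
  rintro ⟨x, y⟩ ⟨h1, h2, h3, h4⟩
  simp only at h1 h2 h3 h4
  have hx : (0 : ℝ) < x := by exact_mod_cast h1
  have hxN : (x : ℝ) ≤ N := by
    refine le_trans ?_ hN.le
    rw [Real.le_sqrt' hx, le_div_iff₀ hc]
    linarith [h x y hx h2 h3]
  have h5 : max |a| |b| * x ≤ max |a| |b| * N := by gcongr
  have h6 : b * x ≤ max |a| |b| * x := by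
    gcongr; exact (le_abs_self b).trans (le_max_right _ _)
  have h7 : -(max |a| |b|) * x ≤ a * x := by
    gcongr; exact (neg_le_neg (le_max_left _ _)).trans (neg_abs_le a)
  have h8 : (y : ℝ) ≤ L := by linarith
  have h9 : (-L : ℝ) ≤ y := by linarith
  exact ⟨⟨h1.le, by exact_mod_cast hxN⟩, ⟨by exact_mod_cast h9, by exact_mod_cast h8⟩⟩
end region

/-- A bijection onto `ℕ` takes values at most `n` at exactly `n + 1` points. -/
lemma ncard_sublevel {ι : Type*} {W : Set ι} {f : ι → ℝ}
    (hf : BijOn f W {x : ℝ | ∃ k : ℕ, x = k}) (n : ℕ) :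
    {z | z ∈ W ∧ f z ≤ n}.ncard = n + 1 := by
  have himg : f '' {z | z ∈ W ∧ f z ≤ n} = (fun k : ℕ => (k : ℝ)) '' (Finset.range (n + 1)) := by
    ext x
    constructor
    · rintro ⟨z, ⟨hz, hzn⟩, rfl⟩
      obtain ⟨k, hk⟩ := hf.mapsTo hz
      refine ⟨k, ?_, hk.symm⟩
      rw [hk] at hzn
      simpa [Nat.lt_succ_iff] using hzn
    · rintro ⟨k, hk, rfl⟩
      obtain ⟨z, hz, hzk⟩ := hf.surjOn ⟨k, rfl⟩
      refine ⟨z, ⟨hz, ?_⟩, hzk⟩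
      rw [hzk]
      simpa [Nat.lt_succ_iff] using hk
  have hinj : InjOn f {z | z ∈ W ∧ f z ≤ n} := hf.injOn.mono fun z hz => hz.1
  rw [← hinj.ncard_image, himg, ncard_image_of_injective _ Nat.cast_injective,
    ncard_coe_finset, Finset.card_range]

/-! ### Packing polynomials -/

section packing
variable {α A B C D E F : ℝ}

/-- The integer points of the sector `0 ≤ y ≤ α x`, as pairs of integers. -/
def sectorLattice (α : ℝ) : Set (ℤ × ℤ) := {z | (0 : ℝ) ≤ z.2 ∧ (z.2 : ℝ) ≤ α * z.1}

/-- The quadratic polynomial with coefficients `A, …, F` in the binomial basis. -/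
noncomputable def quadPoly (A B C D E F x y : ℝ) : ℝ :=
  A * (x * (x - 1) / 2) + B * (x * y) + C * (y * (y - 1) / 2) + D * x + E * y + F

/-- `quadPoly A B C D E F` is a bijection from the integer points of the sector onto the natural
numbers. The coefficients may be any reals: integrality plays no part in the argument. -/
def IsPacking (α A B C D E F : ℝ) : Prop :=
  BijOn (fun z : ℤ × ℤ => quadPoly A B C D E F z.1 z.2) (sectorLattice α) {x : ℝ | ∃ k : ℕ, x = k}

/-- On a cone where the form is positive, the linear part of the polynomial is at most `ε` times the
form, up to an additive constant. -/
lemma abs_quadPoly_sub_form_le {a b : ℝ} (ha : 0 ≤ a) (hab : a ≤ b)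
    (hq : ∀ t ∈ Icc a b, 0 < A + 2 * B * t + C * t ^ 2) (D E F : ℝ) {ε : ℝ} (hε : 0 < ε) :
    ∃ K : ℝ, ∀ x y : ℝ, 0 < x → a * x ≤ y → y ≤ b * x →
      |quadPoly A B C D E F x y - (A * x ^ 2 + 2 * B * x * y + C * y ^ 2) / 2| ≤
        ε * ((A * x ^ 2 + 2 * B * x * y + C * y ^ 2) / 2) + K := by
  obtain ⟨c, hc, h⟩ := exists_form_lower hab hq
  set M := |D - A / 2| + |E - C / 2| * b with hM
  refine ⟨M ^ 2 / (2 * ε * c) + |F|, fun x y hx h1 h2 => ?_⟩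
  have hy : 0 ≤ y := le_trans (by positivity) h1
  have e : quadPoly A B C D E F x y - (A * x ^ 2 + 2 * B * x * y + C * y ^ 2) / 2 =
      (D - A / 2) * x + (E - C / 2) * y + F := by unfold quadPoly; ring
  have h3 : |(D - A / 2) * x + (E - C / 2) * y + F| ≤ M * x + |F| := by
    calc _ ≤ |(D - A / 2) * x| + |(E - C / 2) * y| + |F| := abs_add_three _ _ _
      _ = |D - A / 2| * x + |E - C / 2| * y + |F| := by
        rw [abs_mul, abs_mul, abs_of_pos hx, abs_of_nonneg hy]
      _ ≤ |D - A / 2| * x + |E - C / 2| * (b * x) + |F| := by gcongr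
      _ = _ := by rw [hM]; ring
  -- arithmetic–geometric mean inequality
  have h4 : M * x ≤ ε * (c * x ^ 2 / 2) + M ^ 2 / (2 * ε * c) := by
    have : ε * (c * x ^ 2 / 2) + M ^ 2 / (2 * ε * c) - M * x =
        (ε * c * x - M) ^ 2 / (2 * ε * c) := by field_simp; ring
    have h5 : 0 ≤ (ε * c * x - M) ^ 2 / (2 * ε * c) := by positivity
    linarith
  have h5 : ε * (c * x ^ 2 / 2) ≤ ε * ((A * x ^ 2 + 2 * B * x * y + C * y ^ 2) / 2) := by
    gcongr; exact h x y hx h1 h2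
  rw [e]; linarith

lemma tendsto_affine_div (u v : ℝ) :
    Tendsto (fun m : ℕ => (u * (m : ℝ) ^ 2 + v) / (m : ℝ) ^ 2) atTop (𝓝 u) := by
  have h1 : Tendsto (fun m : ℕ => u + v / (m : ℝ) ^ 2) atTop (𝓝 (u + 0)) := by
    refine tendsto_const_nhds.add (tendsto_const_nhds.div_atTop ?_)
    exact (tendsto_pow_atTop two_ne_zero).comp tendsto_natCast_atTop_atTop
  rw [add_zero] at h1
  refine h1.congr' ?_
  filter_upwards [eventually_gt_atTop 0] with m hm
  have : (m : ℝ) ≠ 0 := by exact_mod_cast hm.ne'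
  field_simp

lemma mem_sectorLattice_of_slope {a b : ℝ} (ha : 0 ≤ a) (hb : b ≤ α) {z : ℤ × ℤ}
    (h1 : 0 < z.1) (h2 : a * z.1 ≤ z.2) (h3 : (z.2 : ℝ) ≤ b * z.1) : z ∈ sectorLattice α := by
  have : (0 : ℝ) < z.1 := by exact_mod_cast h1
  exact ⟨le_trans (by positivity) h2, h3.trans (by gcongr)⟩

lemma integral_le_one (hP : IsPacking α A B C D E F) {a b : ℝ} (ha : 0 ≤ a) (hab : a ≤ b)
    (hb : b ≤ α) (hq : ∀ t ∈ Icc a b, 0 < A + 2 * B * t + C * t ^ 2) :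
    ∫ t in a..b, 1 / (A + 2 * B * t + C * t ^ 2) ≤ 1 := by
  refine le_of_forall_pos_le_add fun ε hε => ?_
  obtain ⟨K, hK⟩ := abs_quadPoly_sub_form_le ha hab hq D E F hε
  refine le_of_tendsto_of_tendsto (tendsto_ncard_latticeRegion hab hq)
    (tendsto_affine_div (1 + ε) (|K| + 1)) (Eventually.of_forall fun m => ?_)
  simp only
  gcongr
  -- every point of `latticeRegion` has `P ≤ (1 + ε) m² + |K|`
  set n := ⌊(1 + ε) * (m : ℝ) ^ 2 + |K|⌋₊ with hn
  have hle : (latticeRegion A B C a b m).ncard ≤ n + 1 := by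
    rw [← ncard_sublevel hP n]
    refine ncard_le_ncard ?_ (finite_of_ncard_ne_zero (by rw [ncard_sublevel hP n]; omega))
    rintro z ⟨h1, h2, h3, h4⟩
    have hz := mem_sectorLattice_of_slope ha hb h1 h2 h3
    refine ⟨hz, ?_⟩
    have h5 := (abs_le.1 (hK z.1 z.2 (by exact_mod_cast h1) h2 h3)).2
    have h6 : quadPoly A B C D E F z.1 z.2 ≤ (1 + ε) * (m : ℝ) ^ 2 + |K| := by
      nlinarith [le_abs_self K]
    obtain ⟨k, hk⟩ := hP.mapsTo hz
    simp only at hk ⊢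
    rw [hk] at h6 ⊢
    have h7 : k ≤ n := Nat.le_floor h6
    exact_mod_cast h7
  have h7 : (n : ℝ) ≤ (1 + ε) * (m : ℝ) ^ 2 + |K| := Nat.floor_le (by positivity)
  have h8 : ((latticeRegion A B C a b m).ncard : ℝ) ≤ n + 1 := by exact_mod_cast hle
  linarith

lemma one_le_integral (hα : 0 < α) (hP : IsPacking α A B C D E F)
    (hq : ∀ t ∈ Icc 0 α, 0 < A + 2 * B * t + C * t ^ 2) :
    1 ≤ ∫ t in 0..α, 1 / (A + 2 * B * t + C * t ^ 2) := by
  refine le_of_forall_pos_le_add fun δ hδ => ?_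
  set ε := min δ (1 / 2) with hε
  have hε0 : 0 < ε := by positivity
  have hε1 : ε ≤ 1 / 2 := min_le_right _ _
  suffices 1 - ε ≤ ∫ t in 0..α, 1 / (A + 2 * B * t + C * t ^ 2) by
    linarith [min_le_left δ (1 / 2)]
  obtain ⟨K, hK⟩ := abs_quadPoly_sub_form_le le_rfl hα.le hq D E F hε0
  refine le_of_tendsto_of_tendsto (tendsto_affine_div (1 - ε) (-|K| - 1))
    (tendsto_ncard_latticeRegion hα.le hq) (Eventually.of_forall fun m => ?_)
  simp only
  gcongr
  rcases lt_or_ge ((1 - ε) * (m : ℝ) ^ 2 - |K|) 0 with hneg | hnn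
  · have : (0 : ℝ) ≤ (latticeRegion A B C 0 α m).ncard := by positivity
    linarith
  -- every nonzero sector point with `P ≤ (1 - ε) m² - |K|` lies in `latticeRegion`
  set n := ⌊(1 - ε) * (m : ℝ) ^ 2 - |K|⌋₊ with hn
  have hle : n + 1 ≤ (latticeRegion A B C 0 α m).ncard + 1 := by
    rw [← ncard_sublevel hP n]
    refine le_trans (ncard_le_ncard ?_ ((finite_latticeRegion hα.le hq m).insert (0, 0)))
      (ncard_insert_le _ _)
    rintro ⟨x, y⟩ ⟨hz, hzn⟩
    have hz1 := hz.1
    have hz2 := hz.2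
    simp only at hz1 hz2 hzn
    have hx : (0 : ℝ) ≤ x := by
      by_contra! hx
      nlinarith
    rcases hx.eq_or_lt with hx | hx
    · left
      rw [← hx, mul_zero] at hz2
      have hy : (y : ℝ) = 0 := le_antisymm hz2 hz1
      have hx' : x = 0 := by exact_mod_cast hx.symm
      have hy' : y = 0 := by exact_mod_cast hy
      rw [hx', hy']
    · right
      have h0 : 0 * (x : ℝ) ≤ y := by rw [zero_mul]; exact hz1
      refine ⟨by exact_mod_cast hx, h0, hz2, ?_⟩
      have h5 := (abs_le.1 (hK x y hx h0 hz2)).1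
      have h6 : (n : ℝ) ≤ (1 - ε) * (m : ℝ) ^ 2 - |K| := Nat.floor_le hnn
      have h7 := le_abs_self K
      have h8 : (1 - ε) * ((A * x ^ 2 + 2 * B * x * y + C * y ^ 2) / 2) ≤
          (1 - ε) * (m : ℝ) ^ 2 := by linarith
      have h9 := le_of_mul_le_mul_left h8 (by linarith)
      simp only
      linarith
  have h7 := Nat.lt_floor_add_one ((1 - ε) * (m : ℝ) ^ 2 - |K|)
  have h8 : (n : ℝ) ≤ (latticeRegion A B C 0 α m).ncard := by exact_mod_cast Nat.le_of_succ_le_succ hle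
  linarith

lemma leadingCoeff_nonneg {u v w : ℝ} (h : ∀ k : ℕ, 0 ≤ u * (k : ℝ) ^ 2 + v * k + w) : 0 ≤ u := by
  by_contra! hu
  obtain ⟨k, hk⟩ := exists_nat_gt (max 1 ((|v| + |w|) / (-u)))
  have h1 : (1 : ℝ) < k := (le_max_left _ _).trans_lt hk
  have h2 : (|v| + |w|) / (-u) < k := (le_max_right _ _).trans_lt hk
  rw [div_lt_iff₀ (by linarith)] at h2
  have h3 : v * k ≤ |v| * k := by gcongr; exact le_abs_self v
  have h4 : w ≤ |w| * k := (le_abs_self w).trans (le_mul_of_one_le_right (abs_nonneg w) h1.le)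
  have := h k
  nlinarith

/-- At a rational slope the values of `P` at the multiples of a lattice point are a quadratic
polynomial in the multiplier, bounded below by `0`; other slopes follow by density. -/
lemma form_nonneg (hα : 0 < α) (hP : IsPacking α A B C D E F) :
    ∀ t ∈ Icc 0 α, 0 ≤ A + 2 * B * t + C * t ^ 2 := by
  have hrat : Ioo 0 α ∩ range ((↑) : ℚ → ℝ) ⊆ {t | 0 ≤ A + 2 * B * t + C * t ^ 2} := by
    rintro _ ⟨⟨h1, h2⟩, r, rfl⟩
    have hd : (0 : ℝ) < r.den := by exact_mod_cast r.den_pos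
    have hr : (r : ℝ) * r.den = r.num := by exact_mod_cast Rat.mul_den_eq_num r
    have h : 0 ≤ (A + 2 * B * r + C * (r : ℝ) ^ 2) * (r.den : ℝ) ^ 2 / 2 := by
      refine leadingCoeff_nonneg (v := (D - A / 2) * r.den + (E - C / 2) * r.num) (w := F)
        fun k => ?_
      obtain ⟨j, hj⟩ := hP.mapsTo (x := ((k : ℤ) * r.den, (k : ℤ) * r.num)) (by
        constructor
        · push_cast
          rw [← hr]
          positivity
        · push_cast
          rw [← hr]
          have : (k : ℝ) * r.den * r ≤ k * r.den * α := by gcongr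
          linarith)
      have : (0 : ℝ) ≤ j := by positivity
      simp only at hj
      rw [← hj] at this
      unfold quadPoly at this
      push_cast at this
      rw [← hr] at this ⊢
      linarith
    have h3 : (0 : ℝ) < (r.den : ℝ) ^ 2 := by positivity
    simp only [mem_ofPred_eq]
    by_contra! hlt
    nlinarith
  have hcl : IsClosed {t : ℝ | 0 ≤ A + 2 * B * t + C * t ^ 2} :=
    isClosed_le continuous_const (by fun_prop)
  intro t ht
  rw [← closure_Ioo hα.ne] at ht
  have h1 := Rat.denseRange_cast (𝕜 := ℝ)
  exact closure_minimal hrat hcl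
    (closure_minimal (h1.open_subset_closure_inter isOpen_Ioo) isClosed_closure ht)

lemma eventually_form_ne_zero (hABC : ¬(A = 0 ∧ B = 0 ∧ C = 0)) {t₀ : ℝ}
    (h0 : A + 2 * B * t₀ + C * t₀ ^ 2 = 0) :
    ∀ᶠ t in 𝓝[≠] t₀, A + 2 * B * t + C * t ^ 2 ≠ 0 := by
  have hfac : ∀ t, A + 2 * B * t + C * t ^ 2 =
      (t - t₀) * ((2 * B + 2 * C * t₀) + C * (t - t₀)) := by
    intro t
    linear_combination h0
  by_cases hc : 2 * B + 2 * C * t₀ = 0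
  · have hC : C ≠ 0 := by
      rintro rfl
      have hB : B = 0 := by linarith
      subst hB
      exact hABC ⟨by linarith, rfl, rfl⟩
    filter_upwards [self_mem_nhdsWithin] with t ht
    have ht' : t - t₀ ≠ 0 := sub_ne_zero.2 ht
    rw [hfac, hc, zero_add]
    positivity
  · have hcont : ContinuousAt (fun t => (2 * B + 2 * C * t₀) + C * (t - t₀)) t₀ := by fun_prop
    have hev := hcont.eventually_ne (y := 0) (by simpa using hc)
    filter_upwards [self_mem_nhdsWithin, hev.filter_mono nhdsWithin_le_nhds] with t ht ht2
    rw [hfac]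
    exact mul_ne_zero (sub_ne_zero.2 ht) ht2

lemma form_pos (hα : 0 < α) (hABC : ¬(A = 0 ∧ B = 0 ∧ C = 0)) (hP : IsPacking α A B C D E F) :
    ∀ t ∈ Icc 0 α, 0 < A + 2 * B * t + C * t ^ 2 := by
  have hnn := form_nonneg hα hP
  intro t₀ ht₀
  refine lt_of_le_of_ne (hnn t₀ ht₀) fun h0 => ?_
  have hne := eventually_form_ne_zero hABC h0.symm
  obtain ⟨δ, hδ, hball⟩ := Metric.mem_nhdsWithin_iff.1 hne
  -- an interval inside `[0, α]` with `t₀` as an endpoint and no zero in its interior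
  obtain ⟨u, v, huv, hu, hv, hmem, hsub⟩ : ∃ u v : ℝ, u < v ∧ 0 ≤ u ∧ v ≤ α ∧ t₀ ∈ uIcc u v ∧
      ∀ t ∈ Ioo u v, t ≠ t₀ ∧ |t - t₀| < δ := by
    rcases ht₀.2.lt_or_eq with h | h
    · refine ⟨t₀, min α (t₀ + δ), lt_min h (by linarith), ht₀.1, min_le_left _ _, left_mem_uIcc,
        fun t ht => ⟨ht.1.ne', ?_⟩⟩
      have := ht.2.trans_le (min_le_right _ _)
      rw [abs_of_pos (by linarith [ht.1])]
      linarith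
    · refine ⟨max 0 (t₀ - δ), t₀, max_lt (by linarith) (by linarith), le_max_left _ _, ht₀.2,
        right_mem_uIcc, fun t ht => ⟨ht.2.ne, ?_⟩⟩
      have := (le_max_right _ _).trans_lt ht.1
      rw [abs_of_neg (by linarith [ht.2])]
      linarith
  have hpos : ∀ t ∈ Ioo u v, 0 < A + 2 * B * t + C * t ^ 2 := fun t ht =>
    lt_of_le_of_ne (hnn t ⟨hu.trans ht.1.le, ht.2.le.trans hv⟩)
      (Ne.symm (hball ⟨by simpa [Real.dist_eq] using (hsub t ht).2, (hsub t ht).1⟩))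
  -- `1 / q` blows up at least like `1 / (t - t₀)`, so it is not integrable up to `t₀`.
  refine not_intervalIntegrable_of_sub_inv_isBigO_punctured (c := t₀)
    (f := fun t => (A + 2 * B * t + C * t ^ 2)⁻¹) ?_ huv.ne hmem ?_
  · have hd : DifferentiableAt ℝ (fun t => A + 2 * B * t + C * t ^ 2) t₀ := by fun_prop
    have hO := hd.hasDerivAt.isBigO_sub
    simp only [← h0, sub_zero] at hO
    refine (hO.mono nhdsWithin_le_nhds).inv_rev ?_
    filter_upwards [hne] with t ht h
    exact absurd h ht
  · rw [intervalIntegrable_iff_integrableOn_Ioc_of_le huv.le]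
    -- exhaust `(u, v)` by compact intervals, over each of which the integral is at most `1`;
    -- the `3` keeps their endpoints in order
    set s : ℕ → ℝ := fun i => (v - u) / ((i : ℝ) + 3) with hs
    have hs0 : Tendsto s atTop (𝓝 0) := by
      refine tendsto_const_nhds.div_atTop ?_
      exact tendsto_atTop_add_const_right _ _ tendsto_natCast_atTop_atTop
    have hspos : ∀ i, 0 < s i := fun i => div_pos (by linarith) (by positivity)
    have hs3 : ∀ i, s i ≤ (v - u) / 3 := fun i => by
      have : (0 : ℝ) ≤ v - u := by linarith
      simp only [hs]
      gcongr
      have : (0 : ℝ) ≤ i := by positivity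
      linarith
    have hle : ∀ i, u + s i ≤ v - s i := fun i => by linarith [hs3 i]
    have hIcc : ∀ i, ∀ t ∈ Icc (u + s i) (v - s i), 0 < A + 2 * B * t + C * t ^ 2 :=
      fun i t ht => hpos t ⟨by linarith [ht.1, hspos i], by linarith [ht.2, hspos i]⟩
    refine integrableOn_Ioc_of_intervalIntegral_norm_bounded (I := 1) (l := atTop)
      (a := fun i => u + s i) (b := fun i => v - s i) (fun i => ?_) ?_ ?_ ?_
    · have := (intervalIntegrable_iff_integrableOn_Ioc_of_le (hle i)).1
        (intervalIntegrable_inv_form (hle i) (hIcc i))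
      simpa only [one_div] using this
    · simpa using hs0.const_add u
    · simpa using hs0.const_sub v
    · refine Eventually.of_forall fun i => ?_
      have h1 := integral_le_one hP (by linarith [hspos i]) (hle i) (by linarith [hspos i]) (hIcc i)
      rw [intervalIntegral.integral_of_le (hle i)] at h1
      refine le_trans (le_of_eq (setIntegral_congr_fun measurableSet_Ioc fun t ht => ?_)) h1
      have := hIcc i t (Ioc_subset_Icc_self ht)
      simp only [one_div]
      exact Real.norm_of_nonneg (by positivity)
end packing

/-- If `P(x,y) = A·x(x−1)/2 + B·xy + C·y(y−1)/2 + D·x + E·y + F` with integer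
coefficients is a quadratic packing polynomial on `S(α)`, then
`lim_{n→∞} (1/n)·#(R_n ∩ ℤ²)` exists and equals
`∫₀^{α} dt / (A + 2Bt + Ct²)`, and this integral equals `1`. -/
theorem lattice_count_limit_eq_integral
    (α : ℝ) (hα : 0 < α)
    (A B C D E F : ℤ) (hABC : ¬(A = 0 ∧ B = 0 ∧ C = 0))
    (P : ℝ → ℝ → ℝ)
    (hP : ∀ x y : ℝ, P x y =
      (A : ℝ) * (x * (x - 1) / 2) + (B : ℝ) * (x * y) + (C : ℝ) * (y * (y - 1) / 2)
        + (D : ℝ) * x + (E : ℝ) * y + (F : ℝ))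
    (hpack : Set.BijOn (fun z : ℝ × ℝ => P z.1 z.2)
        {z : ℝ × ℝ | (0 ≤ z.2 ∧ z.2 ≤ α * z.1) ∧ ∃ m n : ℤ, z.1 = m ∧ z.2 = n}
        {x : ℝ | ∃ k : ℕ, x = k}) :
    Tendsto (fun n : ℕ =>
        (Set.ncard {z : ℝ × ℝ | ((0 ≤ z.2 ∧ z.2 ≤ α * z.1) ∧ 0 ≤ P z.1 z.2 ∧
          P z.1 z.2 ≤ (n : ℝ)) ∧ ∃ m k : ℤ, z.1 = m ∧ z.2 = k} : ℝ) / (n : ℝ))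
      atTop
      (nhds (∫ t in (0 : ℝ)..α, 1 / ((A : ℝ) + 2 * (B : ℝ) * t + (C : ℝ) * t ^ 2))) ∧
    (∫ t in (0 : ℝ)..α, 1 / ((A : ℝ) + 2 * (B : ℝ) * t + (C : ℝ) * t ^ 2)) = 1 := by
  have hpk : IsPacking α A B C D E F := by
    refine ⟨?_, ?_, ?_⟩
    · rintro ⟨m, n⟩ hz
      have := hpack.mapsTo (x := ((m : ℝ), (n : ℝ))) ⟨hz, m, n, rfl, rfl⟩
      simpa only [hP, quadPoly] using this
    · rintro ⟨m, n⟩ hz ⟨m', n'⟩ hz' h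
      have := hpack.injOn.eq_iff (x := ((m : ℝ), (n : ℝ))) (y := ((m' : ℝ), (n' : ℝ)))
        ⟨hz, m, n, rfl, rfl⟩ ⟨hz', m', n', rfl, rfl⟩ |>.1 (by simpa only [hP, quadPoly] using h)
      simpa using this
    · rintro x hx
      obtain ⟨⟨_, _⟩, ⟨hz, m, n, h1, h2⟩, h⟩ := hpack.surjOn hx
      simp only at h1 h2
      subst h1 h2
      exact ⟨(m, n), hz, by simpa only [hP, quadPoly] using h⟩
  have hABC' : ¬((A : ℝ) = 0 ∧ (B : ℝ) = 0 ∧ (C : ℝ) = 0) := by exact_mod_cast hABC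
  have hq := form_pos hα hABC' hpk
  have hint : (∫ t in (0 : ℝ)..α, 1 / ((A : ℝ) + 2 * (B : ℝ) * t + (C : ℝ) * t ^ 2)) = 1 :=
    le_antisymm (integral_le_one hpk le_rfl hα.le le_rfl hq) (one_le_integral hα hpk hq)
  refine ⟨?_, hint⟩
  rw [hint]
  have hcard : ∀ n : ℕ, (Set.ncard {z : ℝ × ℝ | ((0 ≤ z.2 ∧ z.2 ≤ α * z.1) ∧ 0 ≤ P z.1 z.2 ∧
      P z.1 z.2 ≤ (n : ℝ)) ∧ ∃ m k : ℤ, z.1 = m ∧ z.2 = k}) = n + 1 := by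
    intro n
    rw [← ncard_sublevel hpack n]
    congr 1
    ext z
    constructor
    · rintro ⟨⟨h1, -, h2⟩, h3⟩
      exact ⟨⟨h1, h3⟩, h2⟩
    · rintro ⟨⟨h1, h3⟩, h2⟩
      obtain ⟨k, hk⟩ := hpack.mapsTo (x := z) ⟨h1, h3⟩
      refine ⟨⟨h1, ?_, h2⟩, h3⟩
      simp only at hk
      rw [hk]
      positivity
  simp_rw [hcard]
  have h1 : Tendsto (fun n : ℕ => 1 + 1 / (n : ℝ)) atTop (𝓝 (1 + 0)) :=
    tendsto_const_nhds.add tendsto_one_div_atTop_nhds_zero_nat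
  rw [add_zero] at h1
  refine h1.congr' ?_
  filter_upwards [eventually_gt_atTop 0] with n hn
  have : (n : ℝ) ≠ 0 := by exact_mod_cast hn.ne'
  push_cast
  field_simp
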